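/- Let S be a Polish metric space and let P be an asymptotically stable regular Markov operator on S with invariant probability measure μ*, which has the e-property in L_FM(S) at a point z ∈ S, and let (x_m) be a sequence in S converging to z. Then the family of probability measures M = {μ*} ∪ {Pⁿδ_z : n ∈ ℕ} ∪ {Pⁿδ_{x_m} : n, m ∈ ℕ} is tight: for every ε > 0 there exists a compact set K ⊆ S such that μ(S \ K) ≤ ε for every μ ∈ M. -/

import Mathlib

open MeasureTheory ProbabilityTheory Filter Topology

/-- The `n`-step evolution of a measure under the Markov operator generated by the
transition kernel `κ`: `P⁰μ = μ`, `Pⁿ⁺¹μ = (Pⁿμ).bind κ`. -/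
noncomputable def kIter {S : Type*} [MeasurableSpace S] (κ : ProbabilityTheory.Kernel S S) :
    ℕ → Measure S → Measure S
  | 0, μ => μ
  | n + 1, μ => (kIter κ n μ).bind (fun x => κ x)

/-- The `n`-th iterate of the dual operator: `Uⁿf(x) = ∫ f d(Pⁿδₓ)`. -/
noncomputable def kDual {S : Type*} [MeasurableSpace S] (κ : ProbabilityTheory.Kernel S S)
    (n : ℕ) (f : S → ℝ) (x : S) : ℝ :=
  ∫ y, f y ∂(kIter κ n (Measure.dirac x))

/-- A real-valued function is bounded. -/
def IsBddFun {S : Type*} (f : S → ℝ) : Prop := ∃ C : ℝ, ∀ x, |f x| ≤ C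

/-- Asymptotic stability: `μst` is an invariant probability measure and `Pⁿμ → μst`
weakly for every Borel probability measure `μ`. -/
def IsAsympStable {S : Type*} [MeasurableSpace S] [TopologicalSpace S]
    (κ : ProbabilityTheory.Kernel S S) (μst : Measure S) : Prop :=
  IsProbabilityMeasure μst ∧ kIter κ 1 μst = μst ∧
    ∀ μ : Measure S, IsProbabilityMeasure μ → ∀ f : S → ℝ, Continuous f → IsBddFun f →
      Tendsto (fun n => ∫ x, f x ∂(kIter κ n μ)) atTop (𝓝 (∫ x, f x ∂μst))

/-- The e-property in `L_FM(S)` (1-Lipschitz functions with values in `[0,1]`) at a point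
`z`: for every such `f`, `sup_{n} |Uⁿf(x) − Uⁿf(z)| → 0` as `x → z`. -/
def EPropFMAt {S : Type*} [MeasurableSpace S] [PseudoMetricSpace S]
    (κ : ProbabilityTheory.Kernel S S) (z : S) : Prop :=
  ∀ f : S → ℝ, LipschitzWith 1 f → (∀ x, f x ∈ Set.Icc (0 : ℝ) 1) →
    Tendsto (fun x => ⨆ n : ℕ, |kDual κ n f x - kDual κ n f z|) (𝓝 z) (𝓝 0)


open scoped NNReal OnePoint

/-! Let the starting point `y` range over a compact set `C`, here `{z} ∪ {xₘ}`, and compactify time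
to `OnePoint ℕ` by placing the limit law `μst` at `∞`. Asymptotic stability makes `n ↦ Pⁿδ_y`
continuous on the compactified time, and the e-property makes `y ↦ Pⁿδ_y` continuous uniformly in
time when tested on `L_FM(S)`, which suffices for weak convergence; at isolated points of `C` this
uniformity is automatic. The law is therefore jointly continuous in the starting point and the time,
so the family is contained in the continuous image of a compact set, and it is tight by the converse
half of Prokhorov's theorem. -/

section Topology

variable {X : Type*} [TopologicalSpace X]

lemma nhdsWithin_le_pure_of_not_accPt {C : Set X} {y : X} (hy : ¬AccPt y (𝓟 C)) :
    𝓝[C] y ≤ pure y := by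
  rw [accPt_iff_frequently, not_frequently] at hy
  refine le_pure_iff.2 ?_
  filter_upwards [mem_nhdsWithin_of_mem_nhds hy, self_mem_nhdsWithin] with x hx hxC
  exact by_contra fun hne => hx ⟨hne, hxC⟩

lemma eq_of_accPt_insert_range [T2Space X] {ι : Type*} {x : ι → X} {y z : X}
    (hx : Tendsto x cofinite (𝓝 z)) (hy : AccPt y (𝓟 (insert z (Set.range x)))) : y = z := by
  by_contra hne
  obtain ⟨U, hU, V, hV, hUV⟩ := Filter.disjoint_iff.1 (disjoint_nhds_nhds.2 hne)
  have hfinite : {i | x i ∉ V}.Finite := eventually_cofinite.1 (hx hV)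
  refine Set.Infinite.of_accPt (hy.nhds_inter hU) ((hfinite.image x).subset ?_)
  rintro _ ⟨hmemU, rfl | ⟨i, rfl⟩⟩
  · exact absurd (mem_of_mem_nhds hV) (hUV.notMem_of_mem_left hmemU)
  · exact ⟨i, hUV.notMem_of_mem_left hmemU, rfl⟩

end Topology

section WeakConvergence

variable {Ω : Type*} [PseudoEMetricSpace Ω]

lemma exists_lipschitzWith_one_mem_Icc_eq_mul_add {f : Ω → ℝ} {C : ℝ} {L : ℝ≥0}
    (hL : LipschitzWith L f) (hC : ∀ x y, dist (f x) (f y) ≤ C) :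
    ∃ (g : Ω → ℝ) (a b : ℝ), LipschitzWith 1 g ∧ (∀ x, g x ∈ Set.Icc (0 : ℝ) 1) ∧
      f = fun x => a * g x + b := by
  obtain hΩ | ⟨⟨x₀⟩⟩ := isEmpty_or_nonempty Ω
  · exact ⟨f, 0, 0, LipschitzWith.of_edist_le isEmptyElim, isEmptyElim, Subsingleton.elim _ _⟩
  have hC₀ : 0 ≤ C := dist_nonneg.trans (hC x₀ x₀)
  obtain ⟨a, ha⟩ : ∃ a, a = 2 * C + L + 1 := ⟨_, rfl⟩
  have ha₀ : 0 < a := ha ▸ by positivity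
  refine ⟨fun x => a⁻¹ * (f x - (f x₀ - C)), a, f x₀ - C, ?_, fun x => ?_, ?_⟩
  · have hscale : ‖a⁻¹‖₊ * (1 * L) ≤ 1 := by
      rw [← NNReal.coe_le_coe]
      push_cast
      rw [one_mul, Real.norm_of_nonneg (inv_nonneg.2 ha₀.le), inv_mul_le_one₀ ha₀]
      linarith
    exact ((lipschitzWith_smul a⁻¹).comp
      ((IsometryEquiv.subRight (f x₀ - C)).isometry.lipschitz.comp hL)).weaken hscale
  · have hx : -C ≤ f x - f x₀ ∧ f x - f x₀ ≤ C := abs_le.1 (hC x x₀)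
    exact ⟨mul_nonneg (inv_nonneg.2 ha₀.le) (by linarith),
      (inv_mul_le_one₀ ha₀).2 (by linarith [L.coe_nonneg])⟩
  · funext x
    rw [mul_inv_cancel_left₀ ha₀.ne', sub_add_cancel]

lemma tendsto_probabilityMeasure_of_forall_lipschitzWith_one_mem_Icc [MeasurableSpace Ω]
    [OpensMeasurableSpace Ω] {ι : Type*} {l : Filter ι} [l.IsCountablyGenerated]
    {μs : ι → ProbabilityMeasure Ω} {μ : ProbabilityMeasure Ω}
    (h : ∀ f : Ω → ℝ, LipschitzWith 1 f → (∀ x, f x ∈ Set.Icc (0 : ℝ) 1) →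
      Tendsto (fun i => ∫ ω, f ω ∂(μs i : Measure Ω)) l (𝓝 (∫ ω, f ω ∂(μ : Measure Ω)))) :
    Tendsto μs l (𝓝 μ) := by
  refine tendsto_iff_forall_lipschitz_integral_tendsto.2 ?_
  rintro _ ⟨C, hC⟩ ⟨L, hL⟩
  obtain ⟨g, a, b, hg, hg01, rfl⟩ := exists_lipschitzWith_one_mem_Icc_eq_mul_add hL hC
  have hint (ν : ProbabilityMeasure Ω) :
      ∫ ω, (a * g ω + b) ∂(ν : Measure Ω) = a * ∫ ω, g ω ∂(ν : Measure Ω) + b := by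
    have hgi : Integrable g (ν : Measure Ω) :=
      .of_mem_Icc 0 1 hg.continuous.measurable.aemeasurable (.of_forall hg01)
    rw [integral_add (hgi.const_mul a) (integrable_const b), integral_const_mul, integral_const,
      probReal_univ, one_smul]
  simp only [hint]
  exact ((h g hg hg01).const_mul a).add_const b

end WeakConvergence

section CompactFamily

variable {X Ω : Type*} [TopologicalSpace X] [FirstCountableTopology X] [MeasurableSpace Ω]
  {law : X → ℕ → ProbabilityMeasure Ω} {C : Set X}

lemma continuousOn_onePointElim_of_tendstoUniformly_integral [PseudoEMetricSpace Ω]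
    [OpensMeasurableSpace Ω] {μ : ProbabilityMeasure Ω}
    (hlim : ∀ y ∈ C, Tendsto (law y) atTop (𝓝 μ))
    (hunif : ∀ y ∈ C, ∀ f : Ω → ℝ, LipschitzWith 1 f → (∀ ω, f ω ∈ Set.Icc (0 : ℝ) 1) →
      TendstoUniformly (fun x n => ∫ ω, f ω ∂(law x n : Measure Ω))
        (fun n => ∫ ω, f ω ∂(law y n : Measure Ω)) (𝓝[C] y)) :
    ContinuousOn (fun p : X × OnePoint ℕ => p.2.elim μ (law p.1)) (C ×ˢ Set.univ) := by
  rintro ⟨y, t⟩ ⟨hy, -⟩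
  rw [ContinuousWithinAt, nhdsWithin_prod_eq, nhdsWithin_univ]
  refine tendsto_probabilityMeasure_of_forall_lipschitzWith_one_mem_Icc fun f hf hf01 => ?_
  let extLaw (x : X) (t : OnePoint ℕ) : ProbabilityMeasure Ω := t.elim μ (law x)
  let F : BoundedContinuousFunction Ω ℝ :=
    .mkOfBound ⟨f, hf.continuous⟩ 1 fun s t => Real.dist_le_of_mem_Icc_01 (hf01 s) (hf01 t)
  have hcont : Continuous fun t => ∫ ω, f ω ∂(extLaw y t : Measure Ω) :=
    (ProbabilityMeasure.continuous_integral_boundedContinuousFunction F).comp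
      ((OnePoint.continuous_iff_from_nat _).2 (hlim y hy))
  have hunif' : TendstoUniformly (fun x t => ∫ ω, f ω ∂(extLaw x t : Measure Ω))
      (fun t => ∫ ω, f ω ∂(extLaw y t : Measure Ω)) (𝓝[C] y) := fun u hu =>
    (hunif y hy f hf hf01 u hu).mono fun _ hx => OnePoint.rec (refl_mem_uniformity hu) hx
  have hjoint : TendstoUniformly
      (fun (p : X × OnePoint ℕ) t => ∫ ω, f ω ∂(extLaw p.1 t : Measure Ω))
      (fun t => ∫ ω, f ω ∂(extLaw y t : Measure Ω)) (𝓝[C] y ×ˢ 𝓝 t) := fun u hu =>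
    tendsto_fst.eventually (hunif' u hu)
  exact hjoint.tendsto_comp hcont.continuousAt tendsto_snd

lemma isTightMeasureSet_insert_of_tendstoUniformly_integral [PseudoMetricSpace Ω]
    [CompleteSpace Ω] [SecondCountableTopology Ω] [OpensMeasurableSpace Ω]
    {μ : ProbabilityMeasure Ω} (hC : IsCompact C)
    (hlim : ∀ y ∈ C, Tendsto (law y) atTop (𝓝 μ))
    (hunif : ∀ y ∈ C, ∀ f : Ω → ℝ, LipschitzWith 1 f → (∀ ω, f ω ∈ Set.Icc (0 : ℝ) 1) →
      TendstoUniformly (fun x n => ∫ ω, f ω ∂(law x n : Measure Ω))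
        (fun n => ∫ ω, f ω ∂(law y n : Measure Ω)) (𝓝[C] y)) :
    IsTightMeasureSet (insert (μ : Measure Ω) {ν | ∃ y ∈ C, ∃ n, ν = law y n}) := by
  have hcompact := ((hC.prod isCompact_univ).image_of_continuousOn
    (continuousOn_onePointElim_of_tendstoUniformly_integral hlim hunif)).insert μ
  refine (isTightMeasureSet_of_isCompact_closure hcompact.closure).subset ?_
  rintro _ (rfl | ⟨y, hy, n, rfl⟩)
  · exact ⟨μ, Set.mem_insert μ _, rfl⟩
  · exact ⟨law y n, .inr ⟨(y, n), ⟨hy, Set.mem_univ _⟩, rfl⟩, rfl⟩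

end CompactFamily

section Chain

variable {S : Type*} [MeasurableSpace S] (κ : Kernel S S) [IsMarkovKernel κ]

instance isProbabilityMeasure_kIter (n : ℕ) (μ : Measure S) [IsProbabilityMeasure μ] :
    IsProbabilityMeasure (kIter κ n μ) := by
  induction n with
  | zero => assumption
  | succ n ih => exact inferInstanceAs (IsProbabilityMeasure ((kIter κ n μ).bind κ))

/-- The law `Pⁿδ_y` at time `n` of the chain started at `y`, bundled as a point of the space of
probability measures with the topology of weak convergence. -/
noncomputable def stepLaw (y : S) (n : ℕ) : ProbabilityMeasure S :=
  ⟨kIter κ n (Measure.dirac y), inferInstance⟩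

lemma kDual_mem_Icc {f : S → ℝ} (hf : ∀ x, f x ∈ Set.Icc (0 : ℝ) 1) (n : ℕ) (y : S) :
    kDual κ n f y ∈ Set.Icc (0 : ℝ) 1 := by
  refine ⟨integral_nonneg fun s => (hf s).1, ?_⟩
  calc kDual κ n f y ≤ ∫ _, (1 : ℝ) ∂(kIter κ n (Measure.dirac y)) :=
        integral_mono_of_nonneg (.of_forall fun s => (hf s).1) (integrable_const 1)
          (.of_forall fun s => (hf s).2)
    _ = 1 := by rw [integral_const, probReal_univ, one_smul]

variable {κ}

lemma IsAsympStable.tendsto_stepLaw [TopologicalSpace S] [OpensMeasurableSpace S]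
    {μst : ProbabilityMeasure S} (hstab : IsAsympStable κ (μst : Measure S)) (y : S) :
    Tendsto (stepLaw κ y) atTop (𝓝 μst) :=
  ProbabilityMeasure.tendsto_iff_forall_integral_tendsto.2 fun f =>
    hstab.2.2 (Measure.dirac y) inferInstance f f.continuous ⟨‖f‖, f.norm_coe_le_norm⟩

lemma EPropFMAt.tendstoUniformly_kDual [PseudoMetricSpace S] {z : S} (hz : EPropFMAt κ z)
    {f : S → ℝ} (hf : LipschitzWith 1 f) (hf01 : ∀ x, f x ∈ Set.Icc (0 : ℝ) 1) :
    TendstoUniformly (fun y n => kDual κ n f y) (fun n => kDual κ n f z) (𝓝 z) := by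
  refine Metric.tendstoUniformly_iff.2 fun ε hε => ?_
  filter_upwards [(hz f hf hf01).eventually_lt_const hε] with y hy n
  have hbdd : BddAbove (Set.range fun n => |kDual κ n f y - kDual κ n f z|) :=
    ⟨1, Set.forall_mem_range.2 fun n =>
      Real.dist_le_of_mem_Icc_01 (kDual_mem_Icc κ hf01 n y) (kDual_mem_Icc κ hf01 n z)⟩
  rw [dist_comm]
  exact (le_ciSup hbdd n).trans_lt hy

end Chain

theorem tight_family_of_ePropFM_general
    {S : Type*} [PseudoMetricSpace S] [CompleteSpace S] [SecondCountableTopology S]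
    [MeasurableSpace S] [OpensMeasurableSpace S]
    (κ : Kernel S S) [IsMarkovKernel κ] {μst : ProbabilityMeasure S} {C : Set S}
    (hC : IsCompact C) (hlim : ∀ y ∈ C, Tendsto (stepLaw κ y) atTop (𝓝 μst))
    (hE : ∀ y ∈ C, AccPt y (𝓟 C) → EPropFMAt κ y) :
    IsTightMeasureSet (insert (μst : Measure S)
      {ν | ∃ y ∈ C, ∃ n, ν = kIter κ n (Measure.dirac y)}) := by
  refine isTightMeasureSet_insert_of_tendstoUniformly_integral (law := stepLaw κ) hC hlim
    fun y hy f hf hf01 => ?_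
  change TendstoUniformly (fun x n => kDual κ n f x) (fun n => kDual κ n f y) (𝓝[C] y)
  by_cases hacc : AccPt y (𝓟 C)
  · exact fun u hu => nhdsWithin_le_nhds ((hE y hy hacc).tendstoUniformly_kDual hf hf01 u hu)
  · exact fun u hu => nhdsWithin_le_pure_of_not_accPt hacc fun _ => refl_mem_uniformity hu

/-- For an asymptotically stable regular Markov operator with the e-property in `L_FM(S)` at
`z`, and a sequence `xₘ → z`, the family
`{μst} ∪ {Pⁿδ_z : n} ∪ {Pⁿδ_{xₘ} : n, m}` is tight. -/
theorem tight_family_of_ePropFM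
    {S : Type*} [MetricSpace S] [CompleteSpace S] [SecondCountableTopology S]
    [MeasurableSpace S] [BorelSpace S]
    (κ : ProbabilityTheory.Kernel S S) [IsMarkovKernel κ]
    (μst : Measure S) (hstab : IsAsympStable κ μst)
    (z : S) (hEz : EPropFMAt κ z)
    (x : ℕ → S) (hx : Tendsto x atTop (𝓝 z)) :
    ∀ ε > (0 : ℝ), ∃ K : Set S, IsCompact K ∧
      ∀ μ ∈ ({μst} ∪ {ν | ∃ n : ℕ, ν = kIter κ n (Measure.dirac z)} ∪
          {ν | ∃ n m : ℕ, ν = kIter κ n (Measure.dirac (x m))} : Set (Measure S)),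
        μ Kᶜ ≤ ENNReal.ofReal ε := by
  intro ε hε
  have hlim (y : S) : Tendsto (stepLaw κ y) atTop (𝓝 ⟨μst, hstab.1⟩) :=
    IsAsympStable.tendsto_stepLaw hstab y
  have hE (y : S) (hy : AccPt y (𝓟 (insert z (Set.range x)))) : EPropFMAt κ y :=
    eq_of_accPt_insert_range (Nat.cofinite_eq_atTop ▸ hx) hy ▸ hEz
  have htight := tight_family_of_ePropFM_general κ hx.isCompact_insert_range
    (fun y _ => hlim y) fun y _ => hE y
  obtain ⟨K, hK, hKε⟩ := isTightMeasureSet_iff_exists_isCompact_measure_compl_le.1 htight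
    (ENNReal.ofReal ε) (ENNReal.ofReal_pos.2 hε)
  refine ⟨K, hK, fun μ hμ => hKε μ ?_⟩
  obtain (rfl | ⟨n, rfl⟩) | ⟨n, m, rfl⟩ := hμ
  · exact .inl rfl
  · exact .inr ⟨z, .inl rfl, n, rfl⟩
  · exact .inr ⟨x m, .inr ⟨m, rfl⟩, n, rfl⟩
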